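/- There is a constant C > 0 such that for all m, d ∈ ℕ with m, d ≥ 2 and ⌊m/d⌋ ≥ e^6, a jittered sampling point set P of N = m^d points in [0,1)^d satisfies E[D*(P)] ≥ C · √(d·m^d) · √( (1 + log(m/d)) / (m/d) ). -/

import Mathlib

open MeasureTheory ProbabilityTheory Real

noncomputable section

/-- The axis-aligned cube `∏_i [x_i/m, x_i/m + 1/m)` of the `m`-grid partition of `[0,1)^d`. -/
def jitterCube (m d : ℕ) (x : Fin d → Fin m) : Set (Fin d → ℝ) :=
  Set.univ.pi fun i => Set.Ico ((x i : ℝ) / m) ((x i : ℝ) / m + 1 / m)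

/-- The distribution of a jittered sampling point configuration: independently, one point
uniformly distributed in each of the `m^d` cubes. -/
def jitterMeasure (m d : ℕ) : Measure ((Fin d → Fin m) → (Fin d → ℝ)) :=
  Measure.pi fun x => ((m : ENNReal) ^ d) • volume.restrict (jitterCube m d x)

open scoped Classical in
/-- Signed (non-normalized) discrepancy `|P ∩ A| - N·λ(A)` with `N = m^d` of a point
configuration `P`. -/
def jdisc (m d : ℕ) (P : (Fin d → Fin m) → (Fin d → ℝ)) (A : Set (Fin d → ℝ)) : ℝ :=
  ((Finset.univ.filter fun x => P x ∈ A).card : ℝ) - (m : ℝ) ^ d * (volume A).toReal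

/-- The anchored box `[0,y) = ∏_i [0, y_i)`. -/
def anchoredBox (d : ℕ) (y : Fin d → ℝ) : Set (Fin d → ℝ) :=
  Set.univ.pi fun i => Set.Ico 0 (y i)

/-- The (non-normalized) star discrepancy `D*(P) = sup_{y ∈ [0,1)^d} |disc([0,y))|`. -/
def starDisc (m d : ℕ) (P : (Fin d → Fin m) → (Fin d → ℝ)) : ℝ :=
  ⨆ y : {y : Fin d → ℝ // ∀ i, y i ∈ Set.Ico (0 : ℝ) 1}, |jdisc m d P (anchoredBox d y.1)|

/-- The expected star discrepancy of a jittered sampling point set of `m^d` points. -/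
def expStarDisc (m d : ℕ) : ℝ :=
  ∫ P, starDisc m d P ∂(jitterMeasure m d)

/-!
Put `K = ⌊m/d⌋` and `M = m - K`. Next to the cube `[0, M/m)^d` there lie, in each direction `i`,
`K` slabs of `M^(d-1)` cells. A box whose `i`-th side ends in the middle of one of them halves every
cell of that slab, so the slab contributes to the discrepancy half a sum of `M^(d-1)` independent
random signs, while the other slabs of direction `i` contribute nothing.

Such a sum exceeds `c √(M^(d-1) (1 + log K))` with probability of order at least `1/K`: cut it into
about `log K` blocks, each of which exceeds a multiple of its standard deviation with probability
bounded below because its fourth moment is bounded by that of a Gaussian. Hence with probability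
bounded below one of the `K` independent slabs of a direction does so. Cutting the best slab in all
`d` directions at once gives a box whose slabs contribute `c' d √(M^(d-1) (1 + log K))` in
expectation. The choice of the box depends on the slab points only, and given these the remaining
cells contribute zero on average. Finally `M^(d-1)` is comparable to `m^(d-1)` since `K ≤ m/d`.
-/

/-! ### Independence of blocks of random variables -/

theorem iIndep_biSup_of_pairwise_disjoint {Ω ι κ : Type*} {m : ι → MeasurableSpace Ω}
    [mΩ : MeasurableSpace Ω] {μ : Measure Ω} (hle : ∀ i, m i ≤ mΩ) (hm : iIndep m μ)
    {S : κ → Set ι} (hS : Pairwise fun k l => Disjoint (S k) (S l)) :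
    iIndep (fun k => ⨆ i ∈ S k, m i) μ := by
  classical
  refine (iIndep_iff _ _).2 fun J f hf => ?_
  induction J using Finset.induction_on with
  | empty => have := hm.isProbabilityMeasure; simp
  | insert k J hk ih =>
    have hdisj : Disjoint (S k) (⋃ l ∈ J, S l) :=
      Set.disjoint_iUnion₂_right.2 fun l hl => hS (ne_of_mem_of_not_mem hl hk).symm
    have hJ : MeasurableSet[⨆ i ∈ ⋃ l ∈ J, S l, m i] (⋂ l ∈ J, f l) :=
      J.measurableSet_biInter fun l hl =>
        have hle : ⨆ i ∈ S l, m i ≤ ⨆ i ∈ ⋃ l ∈ J, S l, m i :=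
          biSup_mono fun _ hi => Set.mem_biUnion hl hi
        hle _ (hf l (Finset.mem_insert_of_mem hl))
    rw [Finset.set_biInter_insert, Finset.prod_insert hk,
      ← ih fun l hl => hf l (Finset.mem_insert_of_mem hl)]
    exact (Indep_iff _ _ _).1 (indep_iSup_of_disjoint hle hm hdisj) _ _
      (hf k (Finset.mem_insert_self k J)) hJ

theorem iIndepFun_sum_of_pairwise_disjoint {Ω ι κ E : Type*} [mΩ : MeasurableSpace Ω]
    [MeasurableSpace E] [AddCommMonoid E] [MeasurableAdd₂ E] {μ : Measure Ω} {X : ι → Ω → E}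
    (hX : iIndepFun X μ) (hm : ∀ i, Measurable (X i)) {S : κ → Finset ι}
    (hS : Pairwise fun k l => Disjoint (S k) (S l)) :
    iIndepFun (fun k ω => ∑ i ∈ S k, X i ω) μ := by
  have hblocks : iIndep (fun k => ⨆ i ∈ (S k : Set ι), .comap (X i) inferInstance) μ :=
    iIndep_biSup_of_pairwise_disjoint (fun i => (hm i).comap_le) hX
      fun _ _ h => Finset.disjoint_coe.2 (hS h)
  refine (iIndep_iff _ _).2 fun J f hf => (iIndep_iff _ _).1 hblocks J fun k hk => ?_
  have hsum : Measurable[⨆ i ∈ (S k : Set ι), MeasurableSpace.comap (X i) inferInstance]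
      fun ω => ∑ i ∈ S k, X i ω :=
    Finset.measurable_fun_sum _ fun i hi =>
      (comap_measurable (X i)).mono (le_biSup (fun i => MeasurableSpace.comap (X i) _) hi) le_rfl
  exact hsum.comap_le _ (hf k hk)

theorem measureReal_iInter_preimage_eq_prod {Ω κ 𝓧 : Type*} [MeasurableSpace Ω]
    [MeasurableSpace 𝓧] [Fintype κ] {μ : Measure Ω} {Y : κ → Ω → 𝓧} (hY : iIndepFun Y μ)
    {s : κ → Set 𝓧} (hs : ∀ k, MeasurableSet (s k)) :
    μ.real (⋂ k, Y k ⁻¹' s k) = ∏ k, μ.real (Y k ⁻¹' s k) := by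
  simpa [measureReal_def, ENNReal.toReal_prod] using
    congrArg ENNReal.toReal (hY.measure_inter_preimage_eq_mul Finset.univ fun k _ => hs k)

theorem one_sub_exp_neg_sum_le_measureReal_iUnion_preimage {Ω κ 𝓧 : Type*} [MeasurableSpace Ω]
    [MeasurableSpace 𝓧] [Fintype κ] {μ : Measure Ω} {Y : κ → Ω → 𝓧} (hY : iIndepFun Y μ)
    (hm : ∀ k, Measurable (Y k)) {s : κ → Set 𝓧} (hs : ∀ k, MeasurableSet (s k)) :
    1 - exp (-∑ k, μ.real (Y k ⁻¹' s k)) ≤ μ.real (⋃ k, Y k ⁻¹' s k) := by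
  have := hY.isProbabilityMeasure
  have hnone : μ.real (⋃ k, Y k ⁻¹' s k)ᶜ ≤ exp (-∑ k, μ.real (Y k ⁻¹' s k)) :=
    calc μ.real (⋃ k, Y k ⁻¹' s k)ᶜ = ∏ k, μ.real (Y k ⁻¹' (s k)ᶜ) := by
          rw [Set.compl_iUnion]
          exact measureReal_iInter_preimage_eq_prod hY fun k => (hs k).compl
      _ = ∏ k, (1 - μ.real (Y k ⁻¹' s k)) := by
          simp only [Set.preimage_compl, probReal_compl_eq_one_sub (hm _ (hs _))]
      _ ≤ ∏ k, exp (-μ.real (Y k ⁻¹' s k)) :=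
          Finset.prod_le_prod (fun k _ => sub_nonneg.2 measureReal_le_one)
            fun k _ => one_sub_le_exp_neg _
      _ = exp (-∑ k, μ.real (Y k ⁻¹' s k)) := by rw [← exp_sum, Finset.sum_neg_distrib]
  rw [probReal_compl_eq_one_sub (.iUnion fun k => hm k (hs k))] at hnone
  linarith

/-! ### Sums of random signs -/

/-- A random variable taking the values `±1` everywhere and having mean zero, that is, a fair
random sign. -/
structure IsRademacher {Ω : Type*} [MeasurableSpace Ω] (X : Ω → ℝ) (μ : Measure Ω) : Prop where
  measurable : Measurable X
  sq_eq_one : ∀ ω, X ω ^ 2 = 1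
  integral_eq_zero : ∫ ω, X ω ∂μ = 0

section Rademacher

variable {Ω ι : Type*} [MeasurableSpace Ω] {μ : Measure Ω}

theorem IsRademacher.abs_eq_one {X : Ω → ℝ} (hX : IsRademacher X μ) (ω : Ω) : |X ω| = 1 := by
  simpa [abs_eq] using hX.sq_eq_one ω

theorem IsRademacher.integral_pow_mul_eq_zero {X Z : Ω → ℝ} (hX : IsRademacher X μ)
    (hZ : Measurable Z) (hZX : IndepFun Z X μ) (k : ℕ) : ∫ ω, Z ω ^ k * X ω ∂μ = 0 := by
  have := hZX.integral_fun_comp_mul_comp (f := (· ^ k)) (g := id) hZ.aemeasurable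
    hX.measurable.aemeasurable (by fun_prop) (by fun_prop)
  simpa [hX.integral_eq_zero] using this

theorem IsRademacher.integral_add_pow_four [IsProbabilityMeasure μ] {X Z : Ω → ℝ}
    (hX : IsRademacher X μ) (hZ : Measurable Z) (hZX : IndepFun Z X μ)
    (hint : ∀ k : ℕ, Integrable (fun ω => Z ω ^ k) μ) :
    ∫ ω, (Z ω + X ω) ^ 4 ∂μ = ∫ ω, Z ω ^ 4 ∂μ + 6 * ∫ ω, Z ω ^ 2 ∂μ + 1 := by
  have hexpand (ω : Ω) : (Z ω + X ω) ^ 4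
      = Z ω ^ 4 + 6 * Z ω ^ 2 + 1 + 4 * (Z ω ^ 3 * X ω) + 4 * (Z ω ^ 1 * X ω) := by
    linear_combination (6 * Z ω ^ 2 + 4 * Z ω * X ω + X ω ^ 2 + 1) * hX.sq_eq_one ω
  have hmul (k : ℕ) : Integrable (fun ω => 4 * (Z ω ^ k * X ω)) μ :=
    ((hint k).mul_bdd (c := 1) hX.measurable.aestronglyMeasurable
      (.of_forall fun ω => (hX.abs_eq_one ω).le)).const_mul 4
  have h4 := hint 4
  have h2 := (hint 2).const_mul 6
  simp_rw [hexpand]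
  rw [integral_add (by fun_prop) (hmul 1), integral_add (by fun_prop) (hmul 3),
    integral_add (by fun_prop) (by fun_prop), integral_add h4 h2]
  simp only [integral_const_mul, hX.integral_pow_mul_eq_zero hZ hZX]
  simp

variable {X : ι → Ω → ℝ}

theorem abs_sum_rademacher_le (hX : ∀ i, IsRademacher (X i) μ) (S : Finset ι) (ω : Ω) :
    |∑ i ∈ S, X i ω| ≤ S.card := by
  simpa [(hX _).abs_eq_one] using S.abs_sum_le_sum_abs fun i => X i ω

theorem memLp_sum_rademacher [IsFiniteMeasure μ] (hX : ∀ i, IsRademacher (X i) μ)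
    (S : Finset ι) (p : ENNReal) : MemLp (fun ω => ∑ i ∈ S, X i ω) p μ := by
  have hm := fun i => (hX i).measurable
  exact .of_bound (by fun_prop) S.card (.of_forall (abs_sum_rademacher_le hX S))

theorem integrable_sum_rademacher_pow [IsFiniteMeasure μ] (hX : ∀ i, IsRademacher (X i) μ)
    (S : Finset ι) (k : ℕ) : Integrable (fun ω => (∑ i ∈ S, X i ω) ^ k) μ := by
  have hm := fun i => (hX i).measurable
  refine .of_bound (by fun_prop) ((S.card : ℝ) ^ k) (.of_forall fun ω => ?_)
  rw [norm_pow]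
  gcongr
  exact abs_sum_rademacher_le hX S ω

theorem integral_sum_rademacher [IsFiniteMeasure μ] (hX : ∀ i, IsRademacher (X i) μ)
    (S : Finset ι) : ∫ ω, ∑ i ∈ S, X i ω ∂μ = 0 := by
  have hint (i : ι) : Integrable (X i) μ := by
    simpa using (memLp_sum_rademacher hX {i} 1).integrable le_rfl
  rw [integral_finsetSum _ fun i _ => hint i]
  exact Finset.sum_eq_zero fun i _ => (hX i).integral_eq_zero

variable [IsProbabilityMeasure μ]

theorem integral_sum_rademacher_sq (hX : ∀ i, IsRademacher (X i) μ) (hind : iIndepFun X μ)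
    (S : Finset ι) : ∫ ω, (∑ i ∈ S, X i ω) ^ 2 ∂μ = S.card := by
  have hm := fun i => (hX i).measurable
  have hvar (i : ι) : variance (X i) μ = 1 := by
    simp [variance_of_integral_eq_zero (hm i).aemeasurable (hX i).integral_eq_zero,
      (hX i).sq_eq_one]
  have hLp (i : ι) : MemLp (X i) 2 μ :=
    .of_bound (hm i).aestronglyMeasurable 1 (.of_forall fun ω => ((hX i).abs_eq_one ω).le)
  have hsum : (∑ i ∈ S, X i) = fun ω => ∑ i ∈ S, X i ω := by ext; simp
  have := IndepFun.variance_sum (s := S) (fun i _ => hLp i) fun i _ j _ hij => hind.indepFun hij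
  rwa [hsum, variance_of_integral_eq_zero (by fun_prop) (integral_sum_rademacher hX S),
    Finset.sum_congr rfl fun i _ => hvar i, Finset.sum_const, nsmul_one] at this

theorem integral_sum_rademacher_pow_four_le (hX : ∀ i, IsRademacher (X i) μ)
    (hind : iIndepFun X μ) (S : Finset ι) :
    ∫ ω, (∑ i ∈ S, X i ω) ^ 4 ∂μ ≤ 3 * (S.card : ℝ) ^ 2 := by
  classical
  have hm := fun i => (hX i).measurable
  induction S using Finset.induction_on with
  | empty => simp
  | insert a S ha ih =>
    have hZX : IndepFun (fun ω => ∑ i ∈ S, X i ω) (X a) μ := by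
      simpa only [Finset.sum_fn] using hind.indepFun_finsetSum_of_notMem hm ha
    simp_rw [Finset.sum_insert ha, add_comm (X a _)]
    rw [(hX a).integral_add_pow_four (by fun_prop) hZX (integrable_sum_rademacher_pow hX S),
      integral_sum_rademacher_sq hX hind, Finset.card_insert_of_notMem ha]
    push_cast
    linarith

end Rademacher

-- For a standardized variable with fourth moment at most `3`, the left side has mean at least
-- `1 / 50`.
theorem quartic_minorant_indicator (u : ℝ) :
    u / 5 + 11 / 100 * u ^ 2 - u ^ 4 / 80 - 1 / 25 ≤ (Set.Ici (1 / 10)).indicator 1 u := by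
  have hquartic : 3 / 4 * u ^ 2 - u ^ 4 / 16 ≤ |u| := by
    have hfactor : 0 ≤ |u| * (|u| - 2) ^ 2 * (|u| + 4) := by positivity
    rw [← sq_abs u, ← (by decide : Even 4).pow_abs u]
    linarith
  by_cases hu : 1 / 10 ≤ u
  · rw [Set.indicator_of_mem (Set.mem_Ici.2 hu), Pi.one_apply]
    rw [abs_of_nonneg (by linarith)] at hquartic
    nlinarith [sq_nonneg (u - 5)]
  · rw [Set.indicator_of_notMem (by simpa using hu)]
    rcases abs_cases u with ⟨h, -⟩ | ⟨h, -⟩ <;> nlinarith [sq_nonneg u]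

theorem le_measureReal_sqrt_div_le_of_moments {Ω : Type*} [MeasurableSpace Ω] {μ : Measure Ω}
    [IsProbabilityMeasure μ] {Z : Ω → ℝ} {v : ℝ} (hv : 0 < v) (hZ : MemLp Z 4 μ)
    (h1 : ∫ ω, Z ω ∂μ = 0) (h2 : ∫ ω, Z ω ^ 2 ∂μ = v) (h4 : ∫ ω, Z ω ^ 4 ∂μ ≤ 3 * v ^ 2) :
    1 / 50 ≤ μ.real {ω | √v / 10 ≤ Z ω} := by
  have hint1 : Integrable Z μ := hZ.integrable (by norm_num)
  have hint2 : Integrable (fun ω => Z ω ^ 2) μ := (hZ.mono_exponent (by norm_num)).integrable_sq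
  have hint4 : Integrable (fun ω => Z ω ^ 4) μ := by
    simpa [(by decide : Even 4).pow_abs] using hZ.integrable_norm_pow (by norm_num)
  have hr : 0 < √v := sqrt_pos.2 hv
  have hmeas : NullMeasurableSet {ω | √v / 10 ≤ Z ω} μ :=
    nullMeasurableSet_le aemeasurable_const hint1.aemeasurable
  have hminorant (ω : Ω) :
      1 / (5 * √v) * Z ω + 11 / (100 * v) * Z ω ^ 2 - 1 / (80 * v ^ 2) * Z ω ^ 4 - 1 / 25
        ≤ {ω | √v / 10 ≤ Z ω}.indicator 1 ω := by
    have hset : {ω | √v / 10 ≤ Z ω} = (fun ω => Z ω / √v) ⁻¹' Set.Ici (1 / 10) := by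
      ext ω
      simp [le_div_iff₀ hr, inv_mul_eq_div]
    rw [hset]
    convert quartic_minorant_indicator (Z ω / √v) using 1
    · rw [div_pow, div_pow, show √v ^ 4 = (√v ^ 2) ^ 2 by ring, sq_sqrt hv.le]
      ring
    · simp [Set.indicator]
  calc (1 / 50 : ℝ)
      ≤ 11 / (100 * v) * v - 1 / (80 * v ^ 2) * (3 * v ^ 2) - 1 / 25 := by
        field_simp
        norm_num
    _ ≤ 1 / (5 * √v) * 0 + 11 / (100 * v) * ∫ ω, Z ω ^ 2 ∂μ
          - 1 / (80 * v ^ 2) * ∫ ω, Z ω ^ 4 ∂μ - 1 / 25 := by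
        rw [h2, mul_zero, zero_add]
        gcongr
    _ = ∫ ω, (1 / (5 * √v) * Z ω + 11 / (100 * v) * Z ω ^ 2 - 1 / (80 * v ^ 2) * Z ω ^ 4
          - 1 / 25) ∂μ := by
        rw [integral_sub (by fun_prop) (by fun_prop), integral_sub (by fun_prop) (by fun_prop),
          integral_add (by fun_prop) (by fun_prop)]
        simp [integral_const_mul, h1]
    _ ≤ ∫ ω, {ω | √v / 10 ≤ Z ω}.indicator 1 ω ∂μ :=
        integral_mono (by fun_prop) ((integrable_const 1).indicator₀ hmeas) hminorant
    _ = μ.real {ω | √v / 10 ≤ Z ω} := by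
        simp [integral_indicator₀ hmeas]

section RademacherTail

variable {Ω ι : Type*} [MeasurableSpace Ω] {μ : Measure Ω} [IsProbabilityMeasure μ]
  {X : ι → Ω → ℝ}

theorem le_measureReal_sqrt_card_div_le_sum_rademacher (hX : ∀ i, IsRademacher (X i) μ)
    (hind : iIndepFun X μ) {S : Finset ι} (hS : S.Nonempty) :
    1 / 50 ≤ μ.real {ω | √S.card / 10 ≤ ∑ i ∈ S, X i ω} :=
  le_measureReal_sqrt_div_le_of_moments (by simpa using hS) (memLp_sum_rademacher hX S 4)
    (integral_sum_rademacher hX S) (integral_sum_rademacher_sq hX hind S)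
    (integral_sum_rademacher_pow_four_le hX hind S)

-- Cut `S` into `k` blocks of almost equal size and ask every block sum to be large.
theorem pow_le_measureReal_mul_sqrt_le_sum_rademacher (hX : ∀ i, IsRademacher (X i) μ)
    (hind : iIndepFun X μ) {S : Finset ι} {k : ℕ} (hk : k ≠ 0) (hkS : k ≤ S.card) :
    (1 / 50) ^ k ≤ μ.real {ω | k * √(S.card / k : ℕ) / 10 ≤ ∑ i ∈ S, X i ω} := by
  classical
  obtain ⟨P, hP, rfl⟩ := Finpartition.exists_equipartition_card_eq S hk hkS
  have hm := fun i => (hX i).measurable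
  set t : ℝ := √(S.card / P.parts.card : ℕ) / 10 with ht
  have hblock (p : P.parts) : 1 / 50 ≤ μ.real {ω | t ≤ ∑ i ∈ p.1, X i ω} :=
    calc (1 / 50 : ℝ) ≤ μ.real {ω | √p.1.card / 10 ≤ ∑ i ∈ p.1, X i ω} :=
          le_measureReal_sqrt_card_div_le_sum_rademacher hX hind (P.nonempty_of_mem_parts p.2)
      _ ≤ μ.real {ω | t ≤ ∑ i ∈ p.1, X i ω} := by
          refine measureReal_mono (Set.ofPred_subset_ofPred.2 fun ω => le_trans ?_)
          rw [ht]
          gcongr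
          exact hP.average_le_card_part p.2
  have hblocks : iIndepFun (fun (p : P.parts) ω => ∑ i ∈ p.1, X i ω) μ :=
    iIndepFun_sum_of_pairwise_disjoint hind hm fun p q hpq =>
      P.disjoint p.2 q.2 (Subtype.coe_injective.ne hpq)
  calc (1 / 50 : ℝ) ^ P.parts.card = ∏ _p : P.parts, (1 / 50 : ℝ) := by simp
    _ ≤ ∏ p : P.parts, μ.real {ω | t ≤ ∑ i ∈ p.1, X i ω} :=
        Finset.prod_le_prod (fun _ _ => by norm_num) fun p _ => hblock p
    _ = μ.real (⋂ p : P.parts, {ω | t ≤ ∑ i ∈ p.1, X i ω}) :=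
        (measureReal_iInter_preimage_eq_prod (s := fun _ => Set.Ici t) hblocks
          fun _ => measurableSet_Ici).symm
    _ ≤ _ := by
        refine measureReal_mono fun ω hω => ?_
        calc P.parts.card * √(S.card / P.parts.card : ℕ) / 10 = ∑ _p : P.parts, t := by
              simp [ht, mul_div_assoc]
          _ ≤ ∑ p : P.parts, ∑ i ∈ p.1, X i ω :=
              Finset.sum_le_sum fun p _ => Set.mem_iInter.1 hω p
          _ = ∑ i ∈ S, X i ω := by
              rw [Finset.sum_coe_sort P.parts fun p => ∑ i ∈ p, X i ω]
              exact (Finset.sum_biUnion P.disjoint).symm.trans (by rw [P.biUnion_parts])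

theorem exp_neg_le_measureReal_sqrt_le_sum_rademacher (hX : ∀ i, IsRademacher (X i) μ)
    (hind : iIndepFun X μ) {S : Finset ι} {L : ℝ} (hL : 0 < L) (hLS : L ≤ 4 * S.card) :
    exp (-(L + 4)) ≤ μ.real {ω | √(S.card * L) / 30 ≤ ∑ i ∈ S, X i ω} := by
  set k := ⌈L / 4⌉₊
  have hk0 : k ≠ 0 := (Nat.ceil_pos.2 (by positivity)).ne'
  have hkS : k ≤ S.card := Nat.ceil_le.2 (by linarith)
  have hkL : (k : ℝ) < L / 4 + 1 := Nat.ceil_lt_add_one (by positivity)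
  have hLk : L ≤ 4 * k := by linarith [Nat.le_ceil (L / 4)]
  have hfifty : exp (-4) ≤ 1 / 50 := by
    rw [exp_neg, one_div]
    gcongr
    calc (50 : ℝ) ≤ 2.7 ^ 4 := by norm_num
      _ ≤ exp 1 ^ 4 := by gcongr; linarith [exp_one_gt_d9]
      _ = exp 4 := by rw [← exp_nat_mul]; norm_num
  have hcard : (S.card : ℝ) ≤ 2 * k * (S.card / k : ℕ) := by
    have hs : 1 ≤ S.card / k := Nat.div_pos hkS (by lia)
    have : S.card ≤ 2 * k * (S.card / k) := by
      linarith [Nat.lt_mul_div_succ S.card (Nat.pos_of_ne_zero hk0), Nat.mul_le_mul_left k hs]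
    exact_mod_cast this
  calc exp (-(L + 4)) ≤ exp (k * -4) := exp_le_exp.2 (by linarith)
    _ = exp (-4) ^ k := exp_nat_mul _ k
    _ ≤ (1 / 50) ^ k := by gcongr
    _ ≤ μ.real {ω | k * √(S.card / k : ℕ) / 10 ≤ ∑ i ∈ S, X i ω} :=
        pow_le_measureReal_mul_sqrt_le_sum_rademacher hX hind hk0 hkS
    _ ≤ μ.real {ω | √(S.card * L) / 30 ≤ ∑ i ∈ S, X i ω} := by
        have hsqrt : √(S.card * L) ≤ 3 * (k * √(S.card / k : ℕ)) := by
          refine sqrt_le_iff.2 ⟨by positivity, ?_⟩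
          rw [mul_pow, mul_pow, sq_sqrt (by positivity)]
          nlinarith [mul_le_mul hcard hLk hL.le (by positivity)]
        exact measureReal_mono (Set.ofPred_subset_ofPred.2 fun ω => le_trans (by linarith))

theorem le_measureReal_exists_le_sum_rademacher (hX : ∀ i, IsRademacher (X i) μ)
    (hind : iIndepFun X μ) {κ : Type*} [Fintype κ] [Nonempty κ] {S : κ → Finset ι} {n : ℕ}
    (hS : Pairwise fun j k => Disjoint (S j) (S k)) (hcard : ∀ j, (S j).card = n)
    (hn : 1 + log (Fintype.card κ) ≤ 4 * n) :
    1 - exp (-exp (-5)) ≤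
      μ.real {ω | ∃ j, √(n * (1 + log (Fintype.card κ))) / 30 ≤ ∑ i ∈ S j, X i ω} := by
  have hm := fun i => (hX i).measurable
  set K : ℝ := (Fintype.card κ : ℝ) with hK
  set t : ℝ := √(n * (1 + log K)) / 30
  have hK1 : 1 ≤ K := by rw [hK]; exact_mod_cast Fintype.card_pos
  have htail (j : κ) : exp (-5) / K ≤ μ.real {ω | t ≤ ∑ i ∈ S j, X i ω} :=
    calc exp (-5) / K = exp (-(1 + log K + 4)) := by
          rw [show -(1 + log K + 4) = -5 - log K by ring, exp_sub, exp_log (by linarith)]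
      _ ≤ μ.real {ω | √((S j).card * (1 + log K)) / 30 ≤ ∑ i ∈ S j, X i ω} :=
          exp_neg_le_measureReal_sqrt_le_sum_rademacher hX hind (by linarith [log_nonneg hK1])
            (by rwa [hcard])
      _ = μ.real {ω | t ≤ ∑ i ∈ S j, X i ω} := by rw [hcard]
  have hsum : exp (-5) ≤ ∑ j, μ.real {ω | t ≤ ∑ i ∈ S j, X i ω} :=
    calc exp (-5) = ∑ _j : κ, exp (-5) / K := by
          rw [Finset.sum_const, Finset.card_univ, nsmul_eq_mul, ← hK]
          field_simp
      _ ≤ _ := Finset.sum_le_sum fun j _ => htail j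
  calc 1 - exp (-exp (-5)) ≤ 1 - exp (-∑ j, μ.real {ω | t ≤ ∑ i ∈ S j, X i ω}) := by gcongr
    _ ≤ μ.real (⋃ j, {ω | t ≤ ∑ i ∈ S j, X i ω}) :=
        one_sub_exp_neg_sum_le_measureReal_iUnion_preimage (s := fun _ => Set.Ici t)
          (iIndepFun_sum_of_pairwise_disjoint hind hm hS) (fun j => by fun_prop)
          fun _ => measurableSet_Ici
    _ = _ := by rw [Set.ofPred_exists]

end RademacherTail

/-! ### Averaging over an independent σ-algebra -/

-- Given `m'`, an index `a` with `g ≤ X a` is known while `Y a` still averages to zero, so the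
-- conditional expectation of `f` dominates `g` whatever index is chosen.
theorem integral_le_integral_of_exists_le_condExp {Ω α : Type*} [Countable α]
    {m' mY m0 : MeasurableSpace Ω} {μ : Measure Ω} [IsFiniteMeasure μ] (hm' : m' ≤ m0)
    (hmY : mY ≤ m0) (hindep : Indep mY m' μ) {X Y : α → Ω → ℝ} {f g : Ω → ℝ}
    (hX : ∀ a, StronglyMeasurable[m'] (X a)) (hXint : ∀ a, Integrable (X a) μ)
    (hY : ∀ a, StronglyMeasurable[mY] (Y a)) (hYint : ∀ a, Integrable (Y a) μ)
    (hYmean : ∀ a, ∫ ω, Y a ω ∂μ = 0) (hf : Integrable f μ) (hg : Integrable g μ)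
    (hXYf : ∀ a, X a + Y a ≤ᵐ[μ] f) (hgX : ∀ᵐ ω ∂μ, ∃ a, g ω ≤ X a ω) :
    ∫ ω, g ω ∂μ ≤ ∫ ω, f ω ∂μ := by
  have hXf (a : α) : X a ≤ᵐ[μ] μ[f|m'] := by
    have hadd : μ[X a + Y a|m'] =ᵐ[μ] μ[X a|m'] + μ[Y a|m'] := condExp_add (hXint a) (hYint a) m'
    have hmono : μ[X a + Y a|m'] ≤ᵐ[μ] μ[f|m'] :=
      condExp_mono ((hXint a).add (hYint a)) hf (hXYf a)
    filter_upwards [hadd, hmono, condExp_indep_eq hmY hm' (hY a) hindep] with ω hadd hmono hzero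
    rw [hadd, Pi.add_apply, hzero, hYmean, condExp_of_stronglyMeasurable hm' (hX a) (hXint a),
      add_zero] at hmono
    exact hmono
  calc ∫ ω, g ω ∂μ ≤ ∫ ω, μ[f|m'] ω ∂μ := by
        refine integral_mono_ae hg integrable_condExp ?_
        filter_upwards [hgX, ae_all_iff.2 hXf] with ω ⟨a, ha⟩ hXf using ha.trans (hXf a)
    _ = ∫ ω, f ω ∂μ := integral_condExp hm'

theorem indep_cylinderEvents_of_disjoint {ι : Type*} [Fintype ι] {𝓧 : ι → Type*}
    [∀ i, MeasurableSpace (𝓧 i)] (μ : ∀ i, Measure (𝓧 i)) [∀ i, IsProbabilityMeasure (μ i)]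
    {S T : Set ι} (hST : Disjoint S T) :
    Indep (cylinderEvents (X := 𝓧) S) (cylinderEvents T) (Measure.pi μ) :=
  indep_iSup_of_disjoint (fun i => (measurable_pi_apply i).comap_le)
    (iIndepFun_pi (X := fun _ x => x) fun _ => aemeasurable_id) hST

/-! ### Discrepancy cell by cell -/

section Cubes

variable {m d : ℕ}

theorem measurableSet_jitterCube (c : Fin d → Fin m) : MeasurableSet (jitterCube m d c) :=
  .univ_pi fun _ => measurableSet_Ico

theorem measurableSet_anchoredBox (y : Fin d → ℝ) : MeasurableSet (anchoredBox d y) :=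
  .univ_pi fun _ => measurableSet_Ico

theorem mem_jitterCube {c : Fin d → Fin m} {p : Fin d → ℝ} :
    p ∈ jitterCube m d c ↔ ∀ i, c i / m ≤ p i ∧ p i < (c i + 1) / m := by
  simp [jitterCube, add_div]

theorem mem_anchoredBox {y p : Fin d → ℝ} : p ∈ anchoredBox d y ↔ ∀ i, 0 ≤ p i ∧ p i < y i := by
  simp [anchoredBox]

theorem mem_jitterCube_iff_floor [NeZero m] {c : Fin d → Fin m} {p : Fin d → ℝ} :
    p ∈ jitterCube m d c ↔ ∀ i, ⌊p i * m⌋ = c i := by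
  have hm : (0 : ℝ) < m := by exact_mod_cast Nat.pos_of_neZero m
  simp only [mem_jitterCube, div_le_iff₀ hm, lt_div_iff₀ hm, Int.floor_eq_iff, Int.cast_natCast]

theorem pairwise_disjoint_jitterCube [NeZero m] :
    Pairwise fun b c => Disjoint (jitterCube m d b) (jitterCube m d c) := by
  refine fun b c hbc => Set.disjoint_left.2 fun p hb hc => hbc ?_
  rw [mem_jitterCube_iff_floor] at hb hc
  ext i
  exact_mod_cast (hb i).symm.trans (hc i)

theorem exists_mem_jitterCube [NeZero m] {p : Fin d → ℝ} (hp : ∀ i, p i ∈ Set.Ico (0 : ℝ) 1) :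
    ∃ c, p ∈ jitterCube m d c := by
  have hm : (0 : ℝ) < m := by exact_mod_cast Nat.pos_of_neZero m
  have hlt (i : Fin d) : ⌊p i * m⌋₊ < m :=
    (Nat.floor_lt (mul_nonneg (hp i).1 hm.le)).2 (by nlinarith [(hp i).2])
  refine ⟨fun i => ⟨⌊p i * m⌋₊, hlt i⟩, mem_jitterCube_iff_floor.2 fun i => ?_⟩
  exact (Int.natCast_floor_eq_floor (mul_nonneg (hp i).1 hm.le)).symm

theorem volume_jitterCube_ne_top (c : Fin d → Fin m) : volume (jitterCube m d c) ≠ ⊤ := by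
  rw [jitterCube, volume_pi_pi]
  exact ENNReal.prod_ne_top fun i _ => measure_Ico_lt_top.ne

/-- The uniform distribution on the cell `c`, written as in `jitterMeasure`; it is the law of the
sample point of that cell. -/
def cellMeasure (c : Fin d → Fin m) : Measure (Fin d → ℝ) :=
  ((m : ENNReal) ^ d) • volume.restrict (jitterCube m d c)

theorem cellMeasure_real_apply (c : Fin d → Fin m) {A : Set (Fin d → ℝ)} (hA : MeasurableSet A) :
    (cellMeasure c).real A = m ^ d * volume.real (A ∩ jitterCube m d c) := by
  simp [cellMeasure, measureReal_def, Measure.restrict_apply hA]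

theorem cellMeasure_real_setOf_lt [NeZero m] (c : Fin d → Fin m) {s : Fin d → ℝ}
    (hs : ∀ i, s i ∈ Set.Icc (0 : ℝ) 1) :
    (cellMeasure c).real {p | ∀ i, p i < (c i + s i) / m} = ∏ i, s i := by
  have hm : (m : ℝ) ≠ 0 := NeZero.ne _
  have hinter : {p | ∀ i, p i < (c i + s i) / m} ∩ jitterCube m d c
      = Set.univ.pi fun i => Set.Ico (c i / m : ℝ) ((c i + s i) / m) := by
    ext p
    have (i : Fin d) : ((c i : ℝ) + s i) / m ≤ (c i + 1) / m := by
      gcongr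
      exact (hs i).2
    simp only [Set.mem_inter_iff, Set.mem_ofPred_eq, mem_jitterCube, Set.mem_univ_pi, Set.mem_Ico]
    exact ⟨fun h i => ⟨(h.2 i).1, h.1 i⟩,
      fun h => ⟨fun i => (h i).2, fun i => ⟨(h i).1, (h i).2.trans_le (this i)⟩⟩⟩
  have hle : (fun i => (c i / m : ℝ)) ≤ fun i => (c i + s i) / m := fun i => by
    dsimp only
    gcongr
    linarith [(hs i).1]
  have hmeas : MeasurableSet {p : Fin d → ℝ | ∀ i, p i < (c i + s i) / m} := by measurability
  rw [cellMeasure_real_apply c hmeas, hinter, measureReal_def, Real.volume_pi_Ico_toReal hle,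
    ← Fin.prod_const, ← Finset.prod_mul_distrib]
  refine Finset.prod_congr rfl fun i _ => ?_
  field_simp
  ring

theorem cellMeasure_real_congr {c : Fin d → Fin m} {A B : Set (Fin d → ℝ)}
    (hA : MeasurableSet A) (hB : MeasurableSet B)
    (hAB : ∀ p ∈ jitterCube m d c, p ∈ A ↔ p ∈ B) :
    (cellMeasure c).real A = (cellMeasure c).real B := by
  have hinter : A ∩ jitterCube m d c = B ∩ jitterCube m d c :=
    Set.ext fun p => and_congr_left (hAB p)
  rw [cellMeasure_real_apply c hA, cellMeasure_real_apply c hB, hinter]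

instance [NeZero m] (c : Fin d → Fin m) : IsProbabilityMeasure (cellMeasure c) := by
  refine isProbabilityMeasure_iff_real.2 ?_
  have h := cellMeasure_real_setOf_lt c (s := fun _ => 1) fun _ => by simp
  rw [Finset.prod_const_one] at h
  rw [← h]
  refine cellMeasure_real_congr .univ (by measurability) fun p hp => ?_
  simpa using fun i => (mem_jitterCube.1 hp i).2

theorem cellMeasure_real_setOf_lt_half [NeZero m] (c : Fin d → Fin m) (i : Fin d) :
    (cellMeasure c).real {p | p i < (c i + 1 / 2) / m} = 1 / 2 := by
  classical
  set s : Fin d → ℝ := Function.update 1 i (1 / 2)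
  have hset : ∀ p ∈ jitterCube m d c,
      p ∈ {p : Fin d → ℝ | p i < (c i + 1 / 2) / m} ↔
        p ∈ {p : Fin d → ℝ | ∀ k, p k < (c k + s k) / m} := by
    intro p hp
    refine (and_iff_left fun k (_ : k ≠ i) => (mem_jitterCube.1 hp k).2).symm.trans ?_
    exact (Function.forall_update_iff (1 : Fin d → ℝ) fun k s => p k < (c k + s) / m).symm
  have hs : ∀ k, s k ∈ Set.Icc 0 1 :=
    (Function.forall_update_iff (1 : Fin d → ℝ) fun _ s => s ∈ Set.Icc 0 1).2
      ⟨by norm_num, by simp⟩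
  rw [cellMeasure_real_congr (by measurability) (by measurability) hset,
    cellMeasure_real_setOf_lt c hs, Finset.prod_update_of_mem (Finset.mem_univ i)]
  simp

/-- The contribution of the cell `c` to the discrepancy of `A` when its sample point is `p`. -/
def cellDisc (c : Fin d → Fin m) (A : Set (Fin d → ℝ)) (p : Fin d → ℝ) : ℝ :=
  A.indicator 1 p - (cellMeasure c).real A

theorem measurable_cellDisc (c : Fin d → Fin m) {A : Set (Fin d → ℝ)} (hA : MeasurableSet A) :
    Measurable (cellDisc c A) :=
  (measurable_one.indicator hA).sub_const _

theorem abs_cellDisc_le_one [NeZero m] (c : Fin d → Fin m) (A : Set (Fin d → ℝ)) (p : Fin d → ℝ) :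
    |cellDisc c A p| ≤ 1 := by
  have h0 : 0 ≤ (cellMeasure c).real A := measureReal_nonneg
  have h1 : (cellMeasure c).real A ≤ 1 := measureReal_le_one
  rw [abs_le]
  by_cases hp : p ∈ A <;> simp only [cellDisc, hp, Set.indicator_of_mem, Pi.one_apply,
    not_false_eq_true, Set.indicator_of_notMem] <;> constructor <;> linarith

theorem integrable_cellDisc [NeZero m] (c : Fin d → Fin m) {A : Set (Fin d → ℝ)}
    (hA : MeasurableSet A) : Integrable (cellDisc c A) (cellMeasure c) :=
  .of_bound (measurable_cellDisc c hA).aestronglyMeasurable 1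
    (.of_forall (abs_cellDisc_le_one c A))

theorem integral_cellDisc [NeZero m] (c : Fin d → Fin m) {A : Set (Fin d → ℝ)}
    (hA : MeasurableSet A) : ∫ p, cellDisc c A p ∂cellMeasure c = 0 := by
  simp only [cellDisc]
  rw [integral_sub ((integrable_const 1).indicator hA) (integrable_const _),
    integral_indicator_one hA]
  simp

theorem cellDisc_congr {c : Fin d → Fin m} {A B : Set (Fin d → ℝ)} (hA : MeasurableSet A)
    (hB : MeasurableSet B) (hAB : ∀ p ∈ jitterCube m d c, p ∈ A ↔ p ∈ B) {p : Fin d → ℝ}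
    (hp : p ∈ jitterCube m d c) : cellDisc c A p = cellDisc c B p := by
  classical
  simp only [cellDisc, cellMeasure_real_congr hA hB hAB, Set.indicator_apply, hAB p hp]

theorem cellDisc_empty (c : Fin d → Fin m) (p : Fin d → ℝ) : cellDisc c ∅ p = 0 := by
  simp [cellDisc]

theorem cellDisc_univ [NeZero m] (c : Fin d → Fin m) (p : Fin d → ℝ) :
    cellDisc c Set.univ p = 0 := by
  simp [cellDisc]

theorem jdisc_eq_sum_cellDisc [NeZero m] {A : Set (Fin d → ℝ)} (hA : MeasurableSet A)
    (hA1 : ∀ p ∈ A, ∀ i, p i ∈ Set.Ico (0 : ℝ) 1) (P : (Fin d → Fin m) → Fin d → ℝ) :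
    jdisc m d P A = ∑ c, cellDisc c A (P c) := by
  classical
  have hcover : A = ⋃ c ∈ Finset.univ, A ∩ jitterCube m d c := by
    ext p
    simpa using fun hp => exists_mem_jitterCube (hA1 p hp)
  have hvol : ∑ c : Fin d → Fin m, (cellMeasure c).real A = m ^ d * volume.real A := by
    conv_rhs => rw [hcover, measureReal_biUnion_finset
      (fun b _ c _ hbc => ((pairwise_disjoint_jitterCube hbc).inter_left' _).inter_right' _)
      (fun c _ => hA.inter (measurableSet_jitterCube c))
      fun c _ => measure_ne_top_of_subset Set.inter_subset_right (volume_jitterCube_ne_top c)]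
    rw [Finset.mul_sum]
    exact Finset.sum_congr rfl fun c _ => cellMeasure_real_apply c hA
  simp only [cellDisc, Finset.sum_sub_distrib, hvol]
  simp [jdisc, Set.indicator_apply, measureReal_def]

theorem abs_jdisc_le [NeZero m] {A : Set (Fin d → ℝ)} (hA : MeasurableSet A)
    (hA1 : ∀ p ∈ A, ∀ i, p i ∈ Set.Ico (0 : ℝ) 1) (P : (Fin d → Fin m) → Fin d → ℝ) :
    |jdisc m d P A| ≤ Fintype.card (Fin d → Fin m) := by
  rw [jdisc_eq_sum_cellDisc hA hA1]
  calc |∑ c, cellDisc c A (P c)| ≤ ∑ c, |cellDisc c A (P c)| := Finset.abs_sum_le_sum_abs _ _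
    _ ≤ ∑ _c : Fin d → Fin m, 1 := Finset.sum_le_sum fun c _ => abs_cellDisc_le_one c A _
    _ = Fintype.card (Fin d → Fin m) := by simp

theorem volume_real_anchoredBox {y : Fin d → ℝ} (hy : ∀ i, 0 ≤ y i) :
    volume.real (anchoredBox d y) = ∏ i, y i :=
  (Real.volume_pi_Ico_toReal (a := 0) hy).trans (by simp)

theorem tendsto_jdisc_anchoredBox {z : ℕ → Fin d → ℝ} {y : Fin d → ℝ} (hz : ∀ n i, 0 ≤ z n i)
    (hzy : ∀ n i, z n i ≤ y i) (hlim : Filter.Tendsto z .atTop (nhds y))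
    (P : (Fin d → Fin m) → Fin d → ℝ) :
    Filter.Tendsto (fun n => jdisc m d P (anchoredBox d (z n))) .atTop
      (nhds (jdisc m d P (anchoredBox d y))) := by
  classical
  rw [tendsto_pi_nhds] at hlim
  have hmem (c : Fin d → Fin m) :
      ∀ᶠ n in .atTop, P c ∈ anchoredBox d (z n) ↔ P c ∈ anchoredBox d y := by
    simp only [mem_anchoredBox]
    by_cases hc : ∀ i, 0 ≤ P c i ∧ P c i < y i
    · have hlt (i : Fin d) : ∀ᶠ n in .atTop, P c i < z n i :=
        (hlim i).eventually_const_lt (hc i).2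
      filter_upwards [Filter.eventually_all.2 hlt] with n hn
      exact iff_of_true (fun i => ⟨(hc i).1, hn i⟩) hc
    · exact .of_forall fun n => iff_of_false
        (fun h => hc fun i => ⟨(h i).1, (h i).2.trans_le (hzy n i)⟩) hc
  refine Filter.Tendsto.sub (tendsto_nhds_of_eventually_eq ?_) (.const_mul _ ?_)
  · filter_upwards [Filter.eventually_all.2 hmem] with n hn
    simp only [hn]
  · simp only [← measureReal_def, volume_real_anchoredBox (hz _),
      volume_real_anchoredBox fun i => (hz 0 i).trans (hzy 0 i)]
    exact tendsto_finsetProd _ fun i _ => hlim i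

theorem abs_jdisc_anchoredBox_le [NeZero m] {y : Fin d → ℝ} (hy : ∀ i, y i ≤ 1)
    (P : (Fin d → Fin m) → Fin d → ℝ) :
    |jdisc m d P (anchoredBox d y)| ≤ Fintype.card (Fin d → Fin m) :=
  abs_jdisc_le (measurableSet_anchoredBox y)
    (fun _ hp i => ⟨(mem_anchoredBox.1 hp i).1, (mem_anchoredBox.1 hp i).2.trans_le (hy i)⟩) P

theorem le_starDisc [NeZero m] (P : (Fin d → Fin m) → Fin d → ℝ) {y : Fin d → ℝ}
    (hy : ∀ i, y i ∈ Set.Ico (0 : ℝ) 1) : |jdisc m d P (anchoredBox d y)| ≤ starDisc m d P :=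
  le_ciSup (f := fun y : {y : Fin d → ℝ // ∀ i, y i ∈ Set.Ico (0 : ℝ) 1} =>
      |jdisc m d P (anchoredBox d y.1)|)
    ⟨_, Set.forall_mem_range.2 fun y => abs_jdisc_anchoredBox_le (fun i => (y.2 i).2.le) P⟩ ⟨y, hy⟩

theorem starDisc_le [NeZero m] (P : (Fin d → Fin m) → Fin d → ℝ) :
    starDisc m d P ≤ Fintype.card (Fin d → Fin m) :=
  Real.iSup_le (fun y => abs_jdisc_anchoredBox_le (fun i => (y.2 i).2.le) P) (Nat.cast_nonneg _)

theorem starDisc_eq_iSup_rat [NeZero m] (P : (Fin d → Fin m) → Fin d → ℝ) :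
    starDisc m d P = ⨆ z : {z : Fin d → ℚ // ∀ i, (z i : ℝ) ∈ Set.Ico (0 : ℝ) 1},
      |jdisc m d P (anchoredBox d fun i => z.1 i)| := by
  have : Nonempty {y : Fin d → ℝ // ∀ i, y i ∈ Set.Ico (0 : ℝ) 1} := ⟨⟨0, by simp⟩⟩
  have : Nonempty {z : Fin d → ℚ // ∀ i, (z i : ℝ) ∈ Set.Ico (0 : ℝ) 1} := ⟨⟨0, by simp⟩⟩
  refine le_antisymm (ciSup_le fun ⟨y, hy⟩ => ?_) (ciSup_le fun z => le_starDisc P z.2)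
  set z : ℕ → Fin d → ℚ := fun n i => ⌊y i * n⌋₊ / n
  have hz0 (n : ℕ) (i : Fin d) : (0 : ℝ) ≤ z n i := by positivity
  have hzy (n : ℕ) (i : Fin d) : (z n i : ℝ) ≤ y i := by
    push_cast [z]
    exact div_le_of_le_mul₀ n.cast_nonneg (hy i).1
      (Nat.floor_le (mul_nonneg (hy i).1 n.cast_nonneg))
  have hlim : Filter.Tendsto (fun n i => (z n i : ℝ)) .atTop (nhds y) := by
    refine tendsto_pi_nhds.2 fun i => ?_
    push_cast [z]
    exact (tendsto_nat_floor_mul_div_atTop (hy i).1).comp tendsto_natCast_atTop_atTop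
  refine le_of_tendsto (tendsto_jdisc_anchoredBox hz0 hzy hlim P).abs (.of_forall fun n => ?_)
  refine le_ciSup (f := fun z : {z : Fin d → ℚ // ∀ i, (z i : ℝ) ∈ Set.Ico (0 : ℝ) 1} =>
      |jdisc m d P (anchoredBox d fun i => z.1 i)|) ?_
    ⟨z n, fun i => ⟨hz0 n i, (hzy n i).trans_lt (hy i).2⟩⟩
  exact ⟨_, Set.forall_mem_range.2 fun z => abs_jdisc_anchoredBox_le (fun i => (z.2 i).2.le) P⟩

theorem jdisc_anchoredBox_eq_sum [NeZero m] {y : Fin d → ℝ} (hy : ∀ i, y i ≤ 1)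
    (P : (Fin d → Fin m) → Fin d → ℝ) :
    jdisc m d P (anchoredBox d y) = ∑ c, cellDisc c (anchoredBox d y) (P c) :=
  jdisc_eq_sum_cellDisc (measurableSet_anchoredBox y)
    (fun _ hp i => ⟨(mem_anchoredBox.1 hp i).1, (mem_anchoredBox.1 hp i).2.trans_le (hy i)⟩) P

theorem measurable_starDisc [NeZero m] : Measurable (starDisc m d) := by
  rw [funext starDisc_eq_iSup_rat]
  refine .iSup fun z => ?_
  simp only [jdisc_anchoredBox_eq_sum fun i => (z.2 i).2.le]
  exact (Finset.measurable_sum _ fun c _ =>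
    (measurable_cellDisc c (measurableSet_anchoredBox _)).comp (measurable_pi_apply c)).abs

instance [NeZero m] : IsProbabilityMeasure (jitterMeasure m d) :=
  inferInstanceAs (IsProbabilityMeasure (Measure.pi cellMeasure))

theorem integrable_starDisc [NeZero m] : Integrable (starDisc m d) (jitterMeasure m d) := by
  refine .of_bound measurable_starDisc.aestronglyMeasurable (Fintype.card (Fin d → Fin m))
    (.of_forall fun P => ?_)
  rw [starDisc, Real.norm_of_nonneg (Real.iSup_nonneg fun _ => abs_nonneg _)]
  exact starDisc_le P

theorem ae_mem_jitterCube [NeZero m] :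
    ∀ᵐ P ∂jitterMeasure m d, ∀ c, P c ∈ jitterCube m d c := by
  refine ae_all_iff.2 fun c => ?_
  have hcell : ∀ᵐ p ∂cellMeasure c, p ∈ jitterCube m d c :=
    Measure.ae_smul_measure (ae_restrict_mem (measurableSet_jitterCube c)) _
  exact (measurePreserving_eval cellMeasure c).quasiMeasurePreserving.ae hcell

-- The cells outside `S` contribute zero on average, and independently of those in `S`.
theorem integral_le_expStarDisc_of_exists_le [NeZero m] {α : Type*} [Countable α]
    (S : Finset (Fin d → Fin m)) {y : α → Fin d → ℝ} (hy : ∀ a i, y a i ∈ Set.Ico (0 : ℝ) 1)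
    {g : ((Fin d → Fin m) → Fin d → ℝ) → ℝ} (hg : Integrable g (jitterMeasure m d))
    (hgy : ∀ᵐ P ∂jitterMeasure m d,
      ∃ a, g P ≤ ∑ c ∈ S, cellDisc c (anchoredBox d (y a)) (P c)) :
    ∫ P, g P ∂jitterMeasure m d ≤ expStarDisc m d := by
  classical
  have hmeas (T : Finset (Fin d → Fin m)) (a : α) : Measurable[cylinderEvents T]
      fun P : (Fin d → Fin m) → Fin d → ℝ => ∑ c ∈ T, cellDisc c (anchoredBox d (y a)) (P c) :=
    Finset.measurable_sum _ fun c hc =>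
      (measurable_cellDisc c (measurableSet_anchoredBox _)).comp (measurable_cylinderEvent_apply hc)
  have hint (a : α) (c : Fin d → Fin m) : Integrable
      (fun P : (Fin d → Fin m) → Fin d → ℝ => cellDisc c (anchoredBox d (y a)) (P c))
      (jitterMeasure m d) :=
    integrable_comp_eval (μ := cellMeasure) (integrable_cellDisc c (measurableSet_anchoredBox _))
  have hmean (a : α) (c : Fin d → Fin m) :
      ∫ P, cellDisc c (anchoredBox d (y a)) (P c) ∂jitterMeasure m d = 0 :=
    (integral_comp_eval (μ := cellMeasure)
      (measurable_cellDisc c (measurableSet_anchoredBox _)).aestronglyMeasurable).trans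
      (integral_cellDisc c (measurableSet_anchoredBox _))
  have hindep : Indep (cylinderEvents (Sᶜ : Finset _)) (cylinderEvents S) (jitterMeasure m d) :=
    indep_cylinderEvents_of_disjoint cellMeasure
      (Finset.disjoint_coe.2 disjoint_compl_left)
  refine integral_le_integral_of_exists_le_condExp cylinderEvents_le_pi cylinderEvents_le_pi
    hindep (fun a => (hmeas S a).stronglyMeasurable)
    (fun a => integrable_finsetSum _ fun c _ => hint a c)
    (fun a => (hmeas Sᶜ a).stronglyMeasurable)
    (fun a => integrable_finsetSum _ fun c _ => hint a c)
    (fun a => ?_) integrable_starDisc hg (fun a => .of_forall fun P => ?_) hgy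
  · rw [integral_finsetSum _ fun c _ => hint a c]
    exact Finset.sum_eq_zero fun c _ => hmean a c
  · rw [Pi.add_apply, Finset.sum_add_sum_compl, ← jdisc_anchoredBox_eq_sum fun i => (hy a i).2.le]
    exact (le_abs_self _).trans (le_starDisc P (hy a))

end Cubes

/-! ### Boxes cutting slabs in half -/

section Slabs

variable {m d : ℕ}

/-- Twice the discrepancy, in the cell `c`, of the lower half of `c` in direction `i`: this is `1`
if the sample point `p` of the cell lies in the lower half, and `-1` otherwise. -/
def halfSign (i : Fin d) (c : Fin d → Fin m) (p : Fin d → ℝ) : ℝ :=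
  2 * cellDisc c {p | p i < (c i + 1 / 2) / m} p

theorem isRademacher_halfSign [NeZero m] (i : Fin d) (c : Fin d → Fin m) :
    IsRademacher (fun P : (Fin d → Fin m) → Fin d → ℝ => halfSign i c (P c))
      (jitterMeasure m d) where
  measurable := ((measurable_cellDisc c (by measurability)).const_mul 2).comp
    (measurable_pi_apply c)
  sq_eq_one P := by
    classical
    simp only [halfSign, cellDisc, cellMeasure_real_setOf_lt_half, Set.indicator_apply,
      Pi.one_apply]
    split_ifs <;> norm_num
  integral_eq_zero := by
    have hA : MeasurableSet {p : Fin d → ℝ | p i < (c i + 1 / 2) / m} := by measurability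
    refine (integral_comp_eval (μ := cellMeasure) (f := halfSign i c)
      ((measurable_cellDisc c hA).const_mul 2).aestronglyMeasurable).trans ?_
    simp only [halfSign, integral_const_mul, integral_cellDisc c hA, mul_zero]

theorem iIndepFun_halfSign [NeZero m] (i : Fin d) :
    iIndepFun (fun c (P : (Fin d → Fin m) → Fin d → ℝ) => halfSign i c (P c))
      (jitterMeasure m d) :=
  iIndepFun_pi (μ := cellMeasure) (X := halfSign i) fun c =>
    ((measurable_cellDisc c (by measurability)).const_mul 2).aemeasurable

/-- The cells in layer `ℓ ≥ M` of direction `i` all of whose other coordinates are below `M`. In a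
box with all sides at least `M / m` they are cut in direction `i` only. -/
def slab (M : Fin m) (i : Fin d) (ℓ : Set.Ici M) : Finset (Fin d → Fin m) :=
  Fintype.piFinset (Function.update (fun _ => Finset.Iio M) i {ℓ.1})

theorem mem_slab {M : Fin m} {i : Fin d} {ℓ : Set.Ici M} {c : Fin d → Fin m} :
    c ∈ slab M i ℓ ↔ c i = ℓ ∧ ∀ k ≠ i, c k < M := by
  rw [slab, Fintype.mem_piFinset,
    Function.forall_update_iff (fun _ => Finset.Iio M) fun k s => c k ∈ s]
  simp only [Finset.mem_singleton, Finset.mem_Iio]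

theorem card_slab (M : Fin m) (i : Fin d) (ℓ : Set.Ici M) : (slab M i ℓ).card = M ^ (d - 1) := by
  rw [slab, Fintype.card_piFinset, ← Function.comp_def Finset.card, Function.comp_update,
    Finset.prod_update_of_mem (Finset.mem_univ i)]
  simp [Finset.card_univ_sdiff]

theorem pairwise_disjoint_slab (M : Fin m) :
    Pairwise fun j k : Fin d × Set.Ici M => Disjoint (slab M j.1 j.2) (slab M k.1 k.2) := by
  rintro ⟨i, ℓ⟩ ⟨j, n⟩ hne
  refine Finset.disjoint_left.2 fun c hi hj => hne ?_
  rw [mem_slab] at hi hj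
  obtain rfl : i = j := by
    by_contra hij
    exact (hj.2 i hij).not_ge (hi.1.symm ▸ ℓ.2)
  exact Prod.ext rfl (Subtype.ext (hi.1.symm.trans hj.1))

/-- The side length of a box in a given direction: `none` stops below all slabs of that direction,
and `some ℓ` cuts the slab in layer `ℓ` in the middle. -/
def cut (M : Fin m) : Option (Set.Ici M) → ℝ
  | none => M / m
  | some ℓ => (ℓ + 1 / 2) / m

theorem cut_mem_Ico (M : Fin m) (o : Option (Set.Ici M)) : cut M o ∈ Set.Ico (M / m : ℝ) 1 := by
  have hm : (0 : ℝ) < m := by exact_mod_cast M.pos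
  have hlt (k : Fin m) : (k : ℝ) + 1 ≤ m := by exact_mod_cast k.2
  cases o with
  | none => exact ⟨le_rfl, (div_lt_one hm).2 (by linarith [hlt M])⟩
  | some ℓ =>
    have hℓ : (M : ℝ) ≤ ℓ := by exact_mod_cast ℓ.2
    exact ⟨div_le_div_of_nonneg_right (by linarith) hm.le,
      (div_lt_one hm).2 (by linarith [hlt ℓ])⟩

theorem mem_anchoredBox_cut_iff {M : Fin m} {i : Fin d} {ℓ : Set.Ici M} {c : Fin d → Fin m}
    (hc : c ∈ slab M i ℓ) (a : Fin d → Option (Set.Ici M)) {p : Fin d → ℝ}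
    (hp : p ∈ jitterCube m d c) :
    p ∈ anchoredBox d (fun k => cut M (a k)) ↔ p i < cut M (a i) := by
  rw [mem_jitterCube] at hp
  rw [mem_anchoredBox]
  refine ⟨fun h => (h i).2, fun h k => ⟨le_trans (by positivity) (hp k).1, ?_⟩⟩
  obtain rfl | hk := eq_or_ne k i
  · exact h
  · calc p k < (c k + 1) / m := (hp k).2
      _ ≤ M / m := by
        gcongr
        exact_mod_cast (mem_slab.1 hc).2 k hk
      _ ≤ cut M (a k) := (cut_mem_Ico M _).1

theorem cellDisc_anchoredBox_cut_of_eq {M : Fin m} {i : Fin d} {ℓ : Set.Ici M}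
    {c : Fin d → Fin m} (hc : c ∈ slab M i ℓ) {a : Fin d → Option (Set.Ici M)}
    (ha : a i = some ℓ) {p : Fin d → ℝ} (hp : p ∈ jitterCube m d c) :
    cellDisc c (anchoredBox d fun k => cut M (a k)) p = halfSign i c p / 2 := by
  rw [halfSign, mul_div_cancel_left₀ _ two_ne_zero]
  refine cellDisc_congr (measurableSet_anchoredBox _) (by measurability) (fun q hq => ?_) hp
  rw [mem_anchoredBox_cut_iff hc a hq, ha, Set.mem_ofPred_eq, (mem_slab.1 hc).1, cut]

theorem cellDisc_anchoredBox_cut_of_ne [NeZero m] {M : Fin m} {i : Fin d} {ℓ : Set.Ici M}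
    {c : Fin d → Fin m} (hc : c ∈ slab M i ℓ) {a : Fin d → Option (Set.Ici M)}
    (ha : a i ≠ some ℓ) {p : Fin d → ℝ} (hp : p ∈ jitterCube m d c) :
    cellDisc c (anchoredBox d fun k => cut M (a k)) p = 0 := by
  have hempty (h : cut M (a i) ≤ ℓ / m) :
      cellDisc c (anchoredBox d fun k => cut M (a k)) p = 0 := by
    rw [← cellDisc_empty c p]
    refine cellDisc_congr (measurableSet_anchoredBox _) .empty (fun q hq => ?_) hp
    have hq' := (mem_jitterCube.1 hq i).1
    rw [(mem_slab.1 hc).1] at hq'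
    simpa [mem_anchoredBox_cut_iff hc a hq] using h.trans hq'
  have huniv (h : (ℓ + 1) / m ≤ cut M (a i)) :
      cellDisc c (anchoredBox d fun k => cut M (a k)) p = 0 := by
    rw [← cellDisc_univ c p]
    refine cellDisc_congr (measurableSet_anchoredBox _) .univ (fun q hq => ?_) hp
    have hq' := (mem_jitterCube.1 hq i).2
    rw [(mem_slab.1 hc).1] at hq'
    simpa [mem_anchoredBox_cut_iff hc a hq] using hq'.trans_le h
  obtain hi | ⟨k, hi⟩ := (a i).eq_none_or_eq_some
  · exact hempty (by rw [hi, cut]; gcongr; exact ℓ.2)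
  · have hkℓ : k.1 ≠ ℓ.1 := fun h => ha (hi.trans (congrArg some (Subtype.ext h)))
    obtain hlt | hlt := lt_or_gt_of_ne hkℓ
    · refine hempty ?_
      have hlt : (k : ℝ) + 1 ≤ ℓ := by exact_mod_cast hlt
      rw [hi, cut]
      gcongr
      linarith
    · refine huniv ?_
      have hlt : (ℓ : ℝ) + 1 ≤ k := by exact_mod_cast hlt
      rw [hi, cut]
      exact div_le_div_of_nonneg_right (by linarith) m.cast_nonneg

theorem sum_slab_cellDisc_anchoredBox_cut [NeZero m] (M : Fin m) (a : Fin d → Option (Set.Ici M))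
    {P : (Fin d → Fin m) → Fin d → ℝ} (hP : ∀ c, P c ∈ jitterCube m d c) (i : Fin d) :
    ∑ ℓ, ∑ c ∈ slab M i ℓ, cellDisc c (anchoredBox d fun k => cut M (a k)) (P c)
      = (a i).elim 0 fun ℓ => (∑ c ∈ slab M i ℓ, halfSign i c (P c)) / 2 := by
  obtain hi | ⟨ℓ, hi⟩ := (a i).eq_none_or_eq_some
  · rw [hi, Option.elim_none]
    exact Finset.sum_eq_zero fun ℓ _ => Finset.sum_eq_zero fun c hc =>
      cellDisc_anchoredBox_cut_of_ne hc (by simp [hi]) (hP c)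
  · rw [hi, Option.elim_some, Finset.sum_div, Finset.sum_eq_single_of_mem ℓ (Finset.mem_univ ℓ)]
    · exact Finset.sum_congr rfl fun c hc => cellDisc_anchoredBox_cut_of_eq hc hi (hP c)
    · exact fun k _ hk => Finset.sum_eq_zero fun c hc =>
        cellDisc_anchoredBox_cut_of_ne hc (by simpa [hi] using hk.symm) (hP c)

theorem sum_measureReal_exists_slab_le_expStarDisc [NeZero m] (M : Fin m) (t : ℝ) :
    ∑ i : Fin d, (jitterMeasure m d).real {P | ∃ ℓ, t ≤ ∑ c ∈ slab M i ℓ, halfSign i c (P c)}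
      * (t / 2) ≤ expStarDisc m d := by
  classical
  set E : Fin d → Set ((Fin d → Fin m) → Fin d → ℝ) :=
    fun i => {P | ∃ ℓ, t ≤ ∑ c ∈ slab M i ℓ, halfSign i c (P c)} with hE
  have hEmeas (i : Fin d) : MeasurableSet (E i) := by
    simp only [hE, Set.ofPred_exists]
    exact .iUnion fun ℓ => measurableSet_le measurable_const
      (Finset.measurable_sum _ fun c _ => (isRademacher_halfSign i c).measurable)
  have hint (i : Fin d) : Integrable ((E i).indicator fun _ => t / 2) (jitterMeasure m d) :=
    (integrable_const _).indicator (hEmeas i)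
  have hcut : ∀ᵐ P ∂jitterMeasure m d, ∃ a : Fin d → Option (Set.Ici M),
      ∑ i, (E i).indicator (fun _ => t / 2) P ≤
        ∑ c ∈ Finset.univ.biUnion fun j : Fin d × Set.Ici M => slab M j.1 j.2,
          cellDisc c (anchoredBox d fun k => cut M (a k)) (P c) := by
    filter_upwards [ae_mem_jitterCube] with P hP
    have hchoice (i : Fin d) : ∃ o : Option (Set.Ici M), (E i).indicator (fun _ => t / 2) P ≤
        o.elim 0 fun ℓ => (∑ c ∈ slab M i ℓ, halfSign i c (P c)) / 2 := by
      by_cases hi : P ∈ E i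
      · obtain ⟨ℓ, hℓ⟩ := id hi
        exact ⟨some ℓ, by rw [Set.indicator_of_mem hi, Option.elim_some]; linarith⟩
      · exact ⟨none, by rw [Set.indicator_of_notMem hi, Option.elim_none]⟩
    choose a ha using hchoice
    refine ⟨a, (Finset.sum_le_sum fun i _ => ha i).trans_eq ?_⟩
    rw [Finset.sum_biUnion ((pairwise_disjoint_slab M).set_pairwise _), Fintype.sum_prod_type]
    exact Finset.sum_congr rfl fun i _ => (sum_slab_cellDisc_anchoredBox_cut M a hP i).symm
  have hy (a : Fin d → Option (Set.Ici M)) (i : Fin d) : cut M (a i) ∈ Set.Ico (0 : ℝ) 1 :=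
    Set.Ico_subset_Ico_left (by positivity) (cut_mem_Ico M (a i))
  have h := integral_le_expStarDisc_of_exists_le _ hy
    (integrable_finsetSum _ fun i _ => hint i) hcut
  rw [integral_finsetSum _ fun i _ => hint i] at h
  simpa only [integral_indicator_const _ (hEmeas _), smul_eq_mul] using h

theorem mul_sqrt_le_expStarDisc [NeZero m] (M : Fin m)
    (hM : 1 + log ((m - M : ℕ) : ℝ) ≤ 4 * (M : ℝ) ^ (d - 1)) :
    d * ((1 - exp (-exp (-5))) * (√(M ^ (d - 1) * (1 + log ((m - M : ℕ) : ℝ))) / 60))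
      ≤ expStarDisc m d := by
  set t := √(M ^ (d - 1) * (1 + log ((m - M : ℕ) : ℝ))) / 30
  have hprob (i : Fin d) : 1 - exp (-exp (-5)) ≤ (jitterMeasure m d).real
      {P | ∃ ℓ, t ≤ ∑ c ∈ slab M i ℓ, halfSign i c (P c)} := by
    have h := le_measureReal_exists_le_sum_rademacher (isRademacher_halfSign i)
      (iIndepFun_halfSign i) (S := slab M i)
      (fun j k hjk => @pairwise_disjoint_slab m d M (i, j) (i, k) (by simpa using hjk))
      (card_slab M i)
    rw [Fintype.card_Ici, Fin.card_Ici] at h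
    push_cast at h
    exact h hM
  calc d * ((1 - exp (-exp (-5))) * (√(M ^ (d - 1) * (1 + log ((m - M : ℕ) : ℝ))) / 60))
      = ∑ _i : Fin d, (1 - exp (-exp (-5))) * (t / 2) := by
        simp only [t, Finset.sum_const, Finset.card_univ, Fintype.card_fin, nsmul_eq_mul]
        ring
    _ ≤ ∑ i : Fin d, (jitterMeasure m d).real
          {P | ∃ ℓ, t ≤ ∑ c ∈ slab M i ℓ, halfSign i c (P c)} * (t / 2) := by
        gcongr with i
        exact hprob i
    _ ≤ expStarDisc m d := sum_measureReal_exists_slab_le_expStarDisc M t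

end Slabs

/-! ### Choice of parameters -/

theorem pow_le_exp_one_mul_pow {a b : ℝ} {n : ℕ} (ha : 0 ≤ a) (hab : n * a ≤ (n + 1) * b) :
    a ^ n ≤ exp 1 * b ^ n := by
  rcases n.eq_zero_or_pos with rfl | hn
  · simp
  have hn : (0 : ℝ) < n := by exact_mod_cast hn
  have hb : 0 ≤ b := by nlinarith
  calc a ^ n ≤ ((1 + (n : ℝ)⁻¹) * b) ^ n := by
        gcongr
        field_simp
        linarith
    _ = (1 + (n : ℝ)⁻¹) ^ n * b ^ n := mul_pow ..
    _ ≤ exp 1 * b ^ n := by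
        gcongr
        exact one_add_inv_pow_le_exp

theorem one_add_log_div_le {m d : ℕ} (hd : 0 < d) (hdm : d ≤ m) :
    1 + log (m / d : ℝ) ≤ 2 * (1 + log (m / d : ℕ)) := by
  have hd0 : (0 : ℝ) < d := by exact_mod_cast hd
  have hm0 : (0 : ℝ) < m := by exact_mod_cast hd.trans_le hdm
  have hK : (1 : ℝ) ≤ (m / d : ℕ) := by exact_mod_cast Nat.div_pos hdm hd
  have hratio : (m / d : ℝ) ≤ 2 * (m / d : ℕ) := by
    rw [div_le_iff₀ hd0]
    have hlt : (m : ℝ) < d * ((m / d : ℕ) + 1) := by exact_mod_cast Nat.lt_mul_div_succ m hd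
    nlinarith
  calc 1 + log (m / d : ℝ) ≤ 1 + log (2 * (m / d : ℕ)) := by
        gcongr
    _ = 1 + log 2 + log (m / d : ℕ) := by
        rw [log_mul two_ne_zero (by positivity)]
        ring
    _ ≤ 2 * (1 + log (m / d : ℕ)) := by linarith [log_two_lt_d9, log_nonneg hK]

theorem sqrt_mul_sqrt_le_mul_sqrt {m d : ℕ} (hd : 0 < d) (hdm : d ≤ m) :
    √(d * (m : ℝ) ^ d) * √((1 + log ((m : ℝ) / d)) / ((m : ℝ) / d))
      ≤ 3 * d * √(((m - m / d : ℕ) : ℝ) ^ (d - 1) * (1 + log (m / d : ℕ))) := by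
  have hd0 : (0 : ℝ) < d := by exact_mod_cast hd
  have hm0 : (0 : ℝ) < m := by exact_mod_cast hd.trans_le hdm
  have hlog : 0 ≤ 1 + log ((m : ℝ) / d) := by
    have hratio : (1 : ℝ) ≤ m / d := (one_le_div hd0).2 (by exact_mod_cast hdm)
    linarith [log_nonneg hratio]
  have hpow : (m : ℝ) ^ (d - 1) ≤ exp 1 * ((m - m / d : ℕ) : ℝ) ^ (d - 1) := by
    refine pow_le_exp_one_mul_pow hm0.le ?_
    have hmul : ((m / d : ℕ) : ℝ) * d ≤ m := by exact_mod_cast Nat.div_mul_le_self m d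
    rw [Nat.cast_sub (Nat.div_le_self m d), Nat.cast_pred hd]
    linarith
  rw [← sqrt_mul (by positivity)]
  refine sqrt_le_iff.2 ⟨by positivity, ?_⟩
  calc d * (m : ℝ) ^ d * ((1 + log ((m : ℝ) / d)) / ((m : ℝ) / d))
      = d ^ 2 * ((m : ℝ) ^ (d - 1) * (1 + log ((m : ℝ) / d))) := by
        rw [← pow_sub_one_mul hd.ne']
        field_simp
    _ ≤ d ^ 2 * (exp 1 * ((m - m / d : ℕ) : ℝ) ^ (d - 1) * (2 * (1 + log (m / d : ℕ)))) := by
        refine mul_le_mul_of_nonneg_left ?_ (by positivity)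
        exact mul_le_mul hpow (one_add_log_div_le hd hdm) hlog (by positivity)
    _ = exp 1 * (2 * d ^ 2 * (((m - m / d : ℕ) : ℝ) ^ (d - 1) * (1 + log (m / d : ℕ)))) := by
        ring
    _ ≤ 4 * (2 * d ^ 2 * (((m - m / d : ℕ) : ℝ) ^ (d - 1) * (1 + log (m / d : ℕ)))) := by
        gcongr
        linarith [exp_one_lt_d9]
    _ ≤ (3 * d * √(((m - m / d : ℕ) : ℝ) ^ (d - 1) * (1 + log (m / d : ℕ)))) ^ 2 := by
        rw [mul_pow, sq_sqrt (by positivity)]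
        nlinarith [show 0 ≤ d ^ 2 * (((m - m / d : ℕ) : ℝ) ^ (d - 1) * (1 + log (m / d : ℕ))) by
          positivity]

theorem one_add_log_div_le_four_mul_pow {m d : ℕ} (hd : 2 ≤ d) (hdm : d ≤ m) :
    1 + log (m / d : ℕ) ≤ 4 * ((m - m / d : ℕ) : ℝ) ^ (d - 1) := by
  have hK : 0 < m / d := Nat.div_pos hdm (by lia)
  have hKM : m / d ≤ m - m / d := by
    have hmul := Nat.div_mul_le_self m d
    have htwo : m / d * 2 ≤ m / d * d := Nat.mul_le_mul_left _ hd
    lia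
  have hpow : m / d ≤ (m - m / d) ^ (d - 1) := hKM.trans (Nat.le_self_pow (by lia) _)
  have hpow : ((m / d : ℕ) : ℝ) ≤ ((m - m / d : ℕ) : ℝ) ^ (d - 1) := by exact_mod_cast hpow
  have hlog : log (m / d : ℕ) ≤ (m / d : ℕ) - 1 := log_le_sub_one_of_pos (by exact_mod_cast hK)
  linarith [(m / d).cast_nonneg (α := ℝ)]

theorem jittered_sampling_lower_bound_large_ratio_general :
    ∃ C : ℝ, 0 < C ∧ ∀ m d : ℕ, 2 ≤ d → d ≤ m →
      C * √(d * (m : ℝ) ^ d) * √((1 + log ((m : ℝ) / d)) / ((m : ℝ) / d)) ≤ expStarDisc m d := by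
  have hq : 0 < 1 - exp (-exp (-5)) := by simp [exp_pos]
  refine ⟨(1 - exp (-exp (-5))) / 180, by positivity, fun m d hd hdm => ?_⟩
  have hm : 0 < m := by lia
  have hK : 0 < m / d := Nat.div_pos hdm (by lia)
  have : NeZero m := ⟨hm.ne'⟩
  let M : Fin m := ⟨m - m / d, Nat.sub_lt hm hK⟩
  have hM : m - M = m / d := Nat.sub_sub_self (Nat.div_le_self m d)
  have hslab := mul_sqrt_le_expStarDisc (d := d) M
  rw [hM] at hslab
  set R := √((M : ℝ) ^ (d - 1) * (1 + log (m / d : ℕ)))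
  calc (1 - exp (-exp (-5))) / 180 * √(d * (m : ℝ) ^ d) *
        √((1 + log ((m : ℝ) / d)) / ((m : ℝ) / d))
      ≤ (1 - exp (-exp (-5))) / 180 * (3 * d * R) := by
        rw [mul_assoc]
        exact mul_le_mul_of_nonneg_left (sqrt_mul_sqrt_le_mul_sqrt (by lia) hdm) (by positivity)
    _ = d * ((1 - exp (-exp (-5))) * (R / 60)) := by ring
    _ ≤ expStarDisc m d := hslab (one_add_log_div_le_four_mul_pow hd hdm)

/-- There is a constant `C > 0` such that for all `m, d ≥ 2` with `⌊m/d⌋ ≥ e^6`, a jittered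
sampling point set of `N = m^d` points in `[0,1)^d` satisfies
`E[D*(P)] ≥ C·√(d·m^d)·√((1 + log(m/d))/(m/d))`. -/
theorem jittered_sampling_lower_bound_large_ratio :
    ∃ C : ℝ, 0 < C ∧
      ∀ m d : ℕ, 2 ≤ m → 2 ≤ d → Real.exp 6 ≤ ((m / d : ℕ) : ℝ) →
        C * Real.sqrt ((d : ℝ) * (m : ℝ) ^ d) *
            Real.sqrt ((1 + Real.log ((m : ℝ) / d)) / ((m : ℝ) / d))
          ≤ expStarDisc m d := by
  obtain ⟨C, hC, hbound⟩ := jittered_sampling_lower_bound_large_ratio_general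
  refine ⟨C, hC, fun m d _ hd hmd => hbound m d hd (Nat.div_ne_zero_iff.1 fun h => ?_).2⟩
  exact (exp_pos 6).not_ge (by simpa [h] using hmd)
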